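/- arXiv:1712.07385 — 2 statements merged into one kernel-verified Lean document; each statement's English description precedes it below -/
import Mathlib

section
/- Let h : ℝ → ℝ be nondecreasing and bi-Lipschitz with constants 0 < m ≤ M, and let X and Y be integrable real random variables on a probability space (Ω, F, P). Define ρ(X) := inf{x ≥ 0 : E[h(x + X)] ≥ 0} (and similarly ρ(Y)). Then ρ(X) and ρ(Y) are well-defined nonnegative reals and |ρ(X) − ρ(Y)| ≤ (M/m)·E[|X − Y|]. -/
open MeasureTheory

/-- `ρ(X) = inf {x ≥ 0 : E[h(x + X)] ≥ 0}`, the one-dimensional reflection map. -/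
noncomputable def rhoRefl {Ω : Type*} [MeasurableSpace Ω] (P : Measure Ω)
    (h : ℝ → ℝ) (X : Ω → ℝ) : ℝ :=
  sInf {x : ℝ | 0 ≤ x ∧ 0 ≤ ∫ ω, h (x + X ω) ∂P}

/-! Put `φ_X x = E[h(x + X)]`. Taking expectations in the two bounds on `h` shows that `φ_X` still
grows with slope at least `m`, and that `|φ_X - φ_Y| ≤ M E|X - Y|` uniformly. Now `ρ(X)` is the
first point of `[0, ∞)` where `φ_X` is nonnegative, and for functions growing with slope at least
`m` a uniform perturbation of size `c` moves that point by at most `c / m`. -/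

section FirstNonnegPoint

variable {m c : ℝ} {f g : ℝ → ℝ}

theorem nonempty_setOf_nonneg_of_monotone_sub_mul (hm : 0 < m)
    (hf : Monotone fun x => f x - m * x) :
    {x : ℝ | 0 ≤ x ∧ 0 ≤ f x}.Nonempty := by
  have hx : 0 ≤ |f 0| / m := by positivity
  have hgrowth : f 0 - m * 0 ≤ f (|f 0| / m) - m * (|f 0| / m) := hf hx
  rw [mul_div_cancel₀ _ hm.ne'] at hgrowth
  exact ⟨|f 0| / m, hx, by linarith [neg_abs_le (f 0)]⟩

theorem sInf_setOf_nonneg_le_add_div (hm : 0 < m) (hc : 0 ≤ c)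
    (hf : Monotone fun x => f x - m * x) (hg : {x : ℝ | 0 ≤ x ∧ 0 ≤ g x}.Nonempty)
    (hgf : ∀ x, 0 ≤ x → g x ≤ f x + c) :
    sInf {x | 0 ≤ x ∧ 0 ≤ f x} ≤ sInf {x | 0 ≤ x ∧ 0 ≤ g x} + c / m := by
  rw [← sub_le_iff_le_add]
  refine le_csInf hg fun x ⟨hx, hgx⟩ => sub_le_iff_le_add.2 ?_
  have hshift : 0 ≤ c / m := by positivity
  have hgrowth : f x - m * x ≤ f (x + c / m) - m * (x + c / m) :=
    hf (le_add_of_nonneg_right hshift)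
  rw [mul_add, mul_div_cancel₀ _ hm.ne'] at hgrowth
  exact csInf_le ⟨0, fun _ hy => hy.1⟩ ⟨by positivity, by linarith [hgf x hx]⟩

theorem abs_sInf_setOf_nonneg_sub_le_div (hm : 0 < m) (hf : Monotone fun x => f x - m * x)
    (hg : Monotone fun x => g x - m * x) (hfg : ∀ x, 0 ≤ x → |f x - g x| ≤ c) :
    |sInf {x | 0 ≤ x ∧ 0 ≤ f x} - sInf {x | 0 ≤ x ∧ 0 ≤ g x}| ≤ c / m := by
  have hc : 0 ≤ c := (abs_nonneg _).trans (hfg 0 le_rfl)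
  have hle := sInf_setOf_nonneg_le_add_div hm hc hf
    (nonempty_setOf_nonneg_of_monotone_sub_mul hm hg)
    fun x hx => by linarith [neg_le_of_abs_le (hfg x hx)]
  have hge := sInf_setOf_nonneg_le_add_div hm hc hg
    (nonempty_setOf_nonneg_of_monotone_sub_mul hm hf)
    fun x hx => by linarith [le_of_abs_le (hfg x hx)]
  exact abs_sub_le_iff.2 ⟨by linarith, by linarith⟩

end FirstNonnegPoint

theorem monotone_sub_mul_of_mul_abs_sub_le {h : ℝ → ℝ} {m : ℝ} (hmono : Monotone h)
    (hlower : ∀ x y, m * |x - y| ≤ |h x - h y|) : Monotone fun x => h x - m * x := by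
  intro x y hxy
  have hincr : m * (y - x) ≤ h y - h x := by
    simpa only [abs_of_nonneg (sub_nonneg.2 hxy), abs_of_nonneg (sub_nonneg.2 (hmono hxy))]
      using hlower y x
  linarith

section Integral

variable {Ω : Type*} [MeasurableSpace Ω] {P : Measure Ω}

theorem integrable_comp_of_lipschitzWith {E F : Type*} [NormedAddCommGroup E]
    [NormedAddCommGroup F] [IsFiniteMeasure P] {f : E → F} {K : NNReal}
    (hf : LipschitzWith K f) {X : Ω → E} (hX : Integrable X P) :
    Integrable (fun ω => f (X ω)) P := by
  refine ((integrable_const ‖f 0‖).add (hX.norm.const_mul K)).mono'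
    (hf.continuous.comp_aestronglyMeasurable hX.1) (.of_forall fun ω => ?_)
  calc ‖f (X ω)‖ ≤ ‖f 0‖ + ‖f (X ω) - f 0‖ := norm_le_norm_add_norm_sub' _ _
    _ ≤ ‖f 0‖ + K * ‖X ω‖ := by simpa using hf.norm_sub_le (X ω) 0

theorem norm_integral_comp_sub_integral_comp_le {E F : Type*} [NormedAddCommGroup E]
    [NormedAddCommGroup F] [NormedSpace ℝ F] {f : E → F} {K : NNReal} (hf : LipschitzWith K f)
    {X Y : Ω → E} (hfX : Integrable (fun ω => f (X ω)) P)
    (hfY : Integrable (fun ω => f (Y ω)) P) (hXY : Integrable (fun ω => X ω - Y ω) P) :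
    ‖(∫ ω, f (X ω) ∂P) - ∫ ω, f (Y ω) ∂P‖ ≤ K * ∫ ω, ‖X ω - Y ω‖ ∂P := by
  rw [← integral_sub hfX hfY, ← integral_const_mul]
  exact norm_integral_le_of_norm_le (hXY.norm.const_mul K)
    (.of_forall fun ω => hf.norm_sub_le (X ω) (Y ω))

theorem monotone_integral_comp_add_sub_mul [IsFiniteMeasure P] {h : ℝ → ℝ} {m : ℝ}
    (hh : Monotone fun x => h x - m * x) {X : Ω → ℝ}
    (hint : ∀ x, Integrable (fun ω => h (x + X ω)) P) :
    Monotone fun x => (∫ ω, h (x + X ω) ∂P) - m * P.real Set.univ * x := by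
  intro x y hxy
  have hpointwise (ω : Ω) : h (x + X ω) + m * (y - x) ≤ h (y + X ω) := by
    have hgrowth : h (x + X ω) - m * (x + X ω) ≤ h (y + X ω) - m * (y + X ω) :=
      hh (by gcongr)
    linarith
  have hmean : (∫ ω, h (x + X ω) ∂P) + P.real Set.univ * (m * (y - x)) ≤
      ∫ ω, h (y + X ω) ∂P := by
    simpa [integral_add (hint x) (integrable_const _)] using
      integral_mono ((hint x).add (integrable_const _)) (hint y) hpointwise
  linarith

end Integral

theorem rhoRefl_lipschitz
    {Ω : Type*} [MeasurableSpace Ω] (P : Measure Ω) [IsProbabilityMeasure P]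
    (h : ℝ → ℝ) (m M : ℝ) (hm : 0 < m) (hmM : m ≤ M)
    (hmono : Monotone h)
    (hbilip : ∀ x y : ℝ, m * |x - y| ≤ |h x - h y| ∧ |h x - h y| ≤ M * |x - y|)
    (X Y : Ω → ℝ) (hX : Integrable X P) (hY : Integrable Y P) :
    ({x : ℝ | 0 ≤ x ∧ 0 ≤ ∫ ω, h (x + X ω) ∂P}).Nonempty ∧
    BddBelow {x : ℝ | 0 ≤ x ∧ 0 ≤ ∫ ω, h (x + X ω) ∂P} ∧
    0 ≤ rhoRefl P h X ∧
    |rhoRefl P h X - rhoRefl P h Y| ≤ (M / m) * ∫ ω, |X ω - Y ω| ∂P := by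
  lift M to NNReal using hm.le.trans hmM
  have hlip : LipschitzWith M h := .of_dist_le_mul fun x y => (hbilip x y).2
  have hgrowth : Monotone fun x => h x - m * x :=
    monotone_sub_mul_of_mul_abs_sub_le hmono fun x y => (hbilip x y).1
  have hadd {Z : Ω → ℝ} (hZ : Integrable Z P) (x : ℝ) : Integrable (fun ω => x + Z ω) P :=
    (integrable_const x).add hZ
  have hint {Z : Ω → ℝ} (hZ : Integrable Z P) (x : ℝ) : Integrable (fun ω => h (x + Z ω)) P :=
    integrable_comp_of_lipschitzWith hlip (hadd hZ x)
  have hmean {Z : Ω → ℝ} (hZ : Integrable Z P) :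
      Monotone fun x => (∫ ω, h (x + Z ω) ∂P) - m * x := by
    simpa using monotone_integral_comp_add_sub_mul hgrowth (hint hZ)
  have hclose (x : ℝ) :
      |(∫ ω, h (x + X ω) ∂P) - ∫ ω, h (x + Y ω) ∂P| ≤ M * ∫ ω, |X ω - Y ω| ∂P := by
    simpa using norm_integral_comp_sub_integral_comp_le hlip (hint hX x) (hint hY x)
      ((hadd hX x).sub (hadd hY x))
  refine ⟨nonempty_setOf_nonneg_of_monotone_sub_mul hm (hmean hX), ⟨0, fun _ hx => hx.1⟩,
    Real.sInf_nonneg fun _ hx => hx.1, ?_⟩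
  rw [div_mul_eq_mul_div]
  exact abs_sInf_setOf_nonneg_sub_le_div hm (hmean hX) (hmean hY) fun x _ => hclose x
end

section
/- Let h : ℝ → ℝ be nondecreasing and bi-Lipschitz with constants 0 < m ≤ M, and let ξ be an integrable real random variable on a probability space (Ω, F, P) with E[h(ξ)] ≥ 0. Then ρ(ξ) = 0, and consequently for every integrable real random variable X on the same probability space, ρ(X) ≤ (M/m)·E[|X − ξ|]. -/
/-!
The map `ρ` is Lipschitz for the `L¹` distance. Raising the argument of `h` by `c ≥ 0` raises
`E[h(X)]` by at least `m c`, while replacing `Y` by `X` costs at most `M E[(Y - X)⁺]`. Hence if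
`x` is admissible in the infimum defining `ρ(Y)`, then `x + (M/m) E[(Y - X)⁺]` is admissible for
`ρ(X)`, so `ρ(X) ≤ ρ(Y) + (M/m) E[(Y - X)⁺]`. When `E[h(ξ)] ≥ 0`, the shift `0` is admissible for
`ξ`, and the estimate applies with `ρ(ξ) = 0`.
-/

open MeasureTheory

open scoped NNReal

theorem integrable_comp_of_lipschitzWith_s12 {α E F : Type*} [MeasurableSpace α] {μ : Measure α}
    [IsFiniteMeasure μ] [NormedAddCommGroup E] [NormedAddCommGroup F] {K : ℝ≥0} {g : E → F}
    {f : α → E} (hg : LipschitzWith K g) (hf : Integrable f μ) :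
    Integrable (fun a => g (f a)) μ := by
  have hbound : Integrable (fun a => K * ‖f a‖ + ‖g 0‖) μ :=
    (hf.norm.const_mul _).add (integrable_const _)
  refine hbound.mono' (hg.continuous.comp_aestronglyMeasurable hf.aestronglyMeasurable)
    (.of_forall fun a => ?_)
  calc ‖g (f a)‖ ≤ ‖g (f a) - g 0‖ + ‖g 0‖ := norm_le_norm_sub_add _ _
    _ ≤ K * ‖f a‖ + ‖g 0‖ := by simpa using hg.norm_sub_le (f a) 0

theorem sub_le_mul_posPart_of_monotone_of_lipschitzWith {h : ℝ → ℝ} {K : ℝ≥0}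
    (hmono : Monotone h) (hlip : LipschitzWith K h) (x y : ℝ) : h y - h x ≤ K * (y - x)⁺ := by
  rcases le_total x y with hxy | hyx
  · rw [posPart_of_nonneg (sub_nonneg.2 hxy)]
    simpa [Real.norm_eq_abs, abs_of_nonneg (sub_nonneg.2 hxy)] using
      (le_abs_self _).trans (hlip.norm_sub_le y x)
  · rw [posPart_of_nonpos (sub_nonpos.2 hyx), mul_zero]
    exact sub_nonpos.2 (hmono hyx)

section

variable {Ω : Type*} [MeasurableSpace Ω] {P : Measure Ω} {h : ℝ → ℝ} {X Y : Ω → ℝ}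
  {m c x : ℝ} {K : ℝ≥0}

/-- The shifts admissible in the infimum defining `rhoRefl P h X`. -/
def rhoReflShifts (P : Measure Ω) (h : ℝ → ℝ) (X : Ω → ℝ) : Set ℝ :=
  {x : ℝ | 0 ≤ x ∧ 0 ≤ ∫ ω, h (x + X ω) ∂P}

theorem rhoRefl_nonneg : 0 ≤ rhoRefl P h X :=
  Real.sInf_nonneg fun _ hx => hx.1

theorem rhoRefl_le_of_mem (hx : x ∈ rhoReflShifts P h X) : rhoRefl P h X ≤ x :=
  csInf_le ⟨0, fun _ hy => hy.1⟩ hx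

theorem rhoRefl_eq_zero (hX : 0 ≤ ∫ ω, h (X ω) ∂P) : rhoRefl P h X = 0 :=
  le_antisymm (rhoRefl_le_of_mem ⟨le_rfl, by simpa only [zero_add] using hX⟩) rhoRefl_nonneg

section

variable [IsFiniteMeasure P]

theorem integral_comp_le_integral_comp_add_mul_integral_posPart (hmono : Monotone h)
    (hlip : LipschitzWith K h) (hX : Integrable X P) (hY : Integrable Y P) :
    ∫ ω, h (Y ω) ∂P ≤ ∫ ω, h (X ω) ∂P + K * ∫ ω, (Y ω - X ω)⁺ ∂P := by
  have hhX := integrable_comp_of_lipschitzWith_s12 hlip hX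
  have hdiff : Integrable (fun ω => K * (Y ω - X ω)⁺) P := (hY.sub hX).pos_part.const_mul _
  rw [← integral_const_mul, ← integral_add hhX hdiff]
  exact integral_mono (integrable_comp_of_lipschitzWith_s12 hlip hY) (hhX.add hdiff) fun ω =>
    sub_le_iff_le_add'.1 (sub_le_mul_posPart_of_monotone_of_lipschitzWith hmono hlip _ _)

theorem integral_comp_add_measureReal_mul_le_integral_comp_const_add
    (hslope : ∀ ⦃x y⦄, x ≤ y → m * (y - x) ≤ h y - h x) (hc : 0 ≤ c)
    (hhX : Integrable (fun ω => h (X ω)) P) (hhcX : Integrable (fun ω => h (c + X ω)) P) :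
    ∫ ω, h (X ω) ∂P + P.real .univ * (m * c) ≤ ∫ ω, h (c + X ω) ∂P := by
  rw [← smul_eq_mul, ← integral_const, ← integral_add hhX (integrable_const _)]
  refine integral_mono (hhX.add (integrable_const _)) hhcX fun ω => ?_
  have hincrement := hslope (le_add_of_nonneg_left hc : X ω ≤ c + X ω)
  rw [add_sub_cancel_right] at hincrement
  exact add_le_of_le_sub_left hincrement

theorem rhoReflShifts_nonempty (hm : 0 < m)
    (hslope : ∀ ⦃x y⦄, x ≤ y → m * (y - x) ≤ h y - h x) (hlip : LipschitzWith K h)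
    (hX : Integrable X P) : (rhoReflShifts P h X).Nonempty := by
  have hc : 0 ≤ |⨍ ω, h (X ω) ∂P| / m := by positivity
  refine ⟨|⨍ ω, h (X ω) ∂P| / m, hc, ?_⟩
  calc 0 ≤ P.real .univ * (⨍ ω, h (X ω) ∂P + |⨍ ω, h (X ω) ∂P|) :=
        mul_nonneg measureReal_nonneg (by linarith [neg_abs_le (⨍ ω, h (X ω) ∂P)])
    _ = ∫ ω, h (X ω) ∂P + P.real .univ * (m * (|⨍ ω, h (X ω) ∂P| / m)) := by
        rw [mul_add, mul_div_cancel₀ _ hm.ne', ← smul_eq_mul, measure_smul_average]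
    _ ≤ ∫ ω, h (|⨍ ω, h (X ω) ∂P| / m + X ω) ∂P :=
        integral_comp_add_measureReal_mul_le_integral_comp_const_add hslope hc
          (integrable_comp_of_lipschitzWith_s12 hlip hX)
          (integrable_comp_of_lipschitzWith_s12 hlip ((integrable_const _).add hX))

theorem add_mem_rhoReflShifts (hm : 0 < m)
    (hslope : ∀ ⦃x y⦄, x ≤ y → m * (y - x) ≤ h y - h x) (hlip : LipschitzWith K h)
    (hX : Integrable X P) (hY : Integrable Y P) (hx : x ∈ rhoReflShifts P h Y) :
    x + K / m * ⨍ ω, (Y ω - X ω)⁺ ∂P ∈ rhoReflShifts P h X := by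
  have hmono : Monotone h := fun _ _ hle =>
    sub_nonneg.1 ((mul_nonneg hm.le (sub_nonneg.2 hle)).trans (hslope hle))
  have hxX : Integrable (fun ω => x + X ω) P := (integrable_const x).add hX
  have hxY : Integrable (fun ω => x + Y ω) P := (integrable_const x).add hY
  have havg : 0 ≤ ⨍ ω, (Y ω - X ω)⁺ ∂P := integral_nonneg fun _ => posPart_nonneg _
  have hc : 0 ≤ K / m * ⨍ ω, (Y ω - X ω)⁺ ∂P := by positivity
  refine ⟨add_nonneg hx.1 hc, ?_⟩
  calc 0 ≤ ∫ ω, h (x + Y ω) ∂P := hx.2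
    _ ≤ ∫ ω, h (x + X ω) ∂P + K * ∫ ω, (Y ω - X ω)⁺ ∂P := by
        simpa only [add_sub_add_left_eq_sub] using
          integral_comp_le_integral_comp_add_mul_integral_posPart hmono hlip hxX hxY
    _ = ∫ ω, h (x + X ω) ∂P + P.real .univ * (m * (K / m * ⨍ ω, (Y ω - X ω)⁺ ∂P)) := by
        rw [← mul_assoc m, mul_div_cancel₀ _ hm.ne', mul_left_comm,
          ← smul_eq_mul (P.real .univ), measure_smul_average]
    _ ≤ ∫ ω, h (K / m * ⨍ ω, (Y ω - X ω)⁺ ∂P + (x + X ω)) ∂P :=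
        integral_comp_add_measureReal_mul_le_integral_comp_const_add hslope hc
          (integrable_comp_of_lipschitzWith_s12 hlip hxX)
          (integrable_comp_of_lipschitzWith_s12 hlip ((integrable_const _).add hxX))
    _ = ∫ ω, h (x + K / m * ⨍ ω, (Y ω - X ω)⁺ ∂P + X ω) ∂P := by
        simp only [add_left_comm, add_assoc]

theorem rhoRefl_le_rhoRefl_add (hm : 0 < m)
    (hslope : ∀ ⦃x y⦄, x ≤ y → m * (y - x) ≤ h y - h x) (hlip : LipschitzWith K h)
    (hX : Integrable X P) (hY : Integrable Y P) :
    rhoRefl P h X ≤ rhoRefl P h Y + K / m * ⨍ ω, (Y ω - X ω)⁺ ∂P :=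
  sub_le_iff_le_add.1 <| le_csInf (rhoReflShifts_nonempty hm hslope hlip hY) fun _ hx =>
    sub_le_iff_le_add.2 <| rhoRefl_le_of_mem (add_mem_rhoReflShifts hm hslope hlip hX hY hx)

end

theorem integral_posPart_sub_le_integral_abs_sub (hX : Integrable X P) (hY : Integrable Y P) :
    ∫ ω, (Y ω - X ω)⁺ ∂P ≤ ∫ ω, |X ω - Y ω| ∂P :=
  integral_mono (hY.sub hX).pos_part (hX.sub hY).abs fun ω =>
    sup_le (abs_sub_comm (Y ω) (X ω) ▸ le_abs_self _) (abs_nonneg _)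

end

theorem rhoRefl_eq_zero_and_bound_general
    {Ω : Type*} [MeasurableSpace Ω] (P : Measure Ω) [IsFiniteMeasure P]
    (h : ℝ → ℝ) (m M : ℝ) (hm : 0 < m) (hmono : Monotone h)
    (hbilip : ∀ x y : ℝ, m * |x - y| ≤ |h x - h y| ∧ |h x - h y| ≤ M * |x - y|)
    (ξ : Ω → ℝ) (hξ : Integrable ξ P) (hξ0 : 0 ≤ ∫ ω, h (ξ ω) ∂P) :
    rhoRefl P h ξ = 0 ∧
    ∀ X : Ω → ℝ, Integrable X P →
      rhoRefl P h X ≤ (M / m) * ⨍ ω, (ξ ω - X ω)⁺ ∂P := by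
  have hM : 0 ≤ M := hm.le.trans <| by simpa using (hbilip 1 0).1.trans (hbilip 1 0).2
  have hslope ⦃x y : ℝ⦄ (hle : x ≤ y) : m * (y - x) ≤ h y - h x := by
    simpa only [abs_of_nonneg (sub_nonneg.2 hle), abs_of_nonneg (sub_nonneg.2 (hmono hle))]
      using (hbilip y x).1
  have hlip : LipschitzWith M.toNNReal h := .of_dist_le' fun x y => (hbilip x y).2
  refine ⟨rhoRefl_eq_zero hξ0, fun X hX => ?_⟩
  simpa only [rhoRefl_eq_zero hξ0, zero_add, Real.coe_toNNReal M hM] using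
    rhoRefl_le_rhoRefl_add hm hslope hlip hX hξ

theorem rhoRefl_eq_zero_and_bound
    {Ω : Type*} [MeasurableSpace Ω] (P : Measure Ω) [IsProbabilityMeasure P]
    (h : ℝ → ℝ) (m M : ℝ) (hm : 0 < m) (hmM : m ≤ M)
    (hmono : Monotone h)
    (hbilip : ∀ x y : ℝ, m * |x - y| ≤ |h x - h y| ∧ |h x - h y| ≤ M * |x - y|)
    (ξ : Ω → ℝ) (hξ : Integrable ξ P) (hξ0 : 0 ≤ ∫ ω, h (ξ ω) ∂P) :
    rhoRefl P h ξ = 0 ∧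
    ∀ X : Ω → ℝ, Integrable X P →
      rhoRefl P h X ≤ (M / m) * ∫ ω, |X ω - ξ ω| ∂P := by
  obtain ⟨hzero, hbound⟩ := rhoRefl_eq_zero_and_bound_general P h m M hm hmono hbilip ξ hξ hξ0
  simp only [average_eq_integral] at hbound
  refine ⟨hzero, fun X hX => (hbound X hX).trans ?_⟩
  exact mul_le_mul_of_nonneg_left (integral_posPart_sub_le_integral_abs_sub hX hξ)
    (div_nonneg (hm.le.trans hmM) hm.le)
end
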